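/- Let n ≥ 1 and let (A(t))_{t∈ℕ} be a sequence of confidence matrices (row-stochastic n×n matrices with nonnegative real entries) such that for some δ > 0 and all t: (1) every diagonal entry of A(t) is positive; (2) A(t)_{ij} > 0 ⟺ A(t)_{ji} > 0 for all i,j; (3) every positive entry of A(t) is greater than δ. Then for every initial opinion profile X(0) ∈ ℝⁿ, the process of continuous opinion dynamics X(t+1) = A(t)·X(t) converges: the limit X(∞) := lim_{t→∞} X(t) exists in ℝⁿ. Moreover there are a time step t₀ and a partition I₁,…,I_p of {1,…,n} (independent of X(0)) such that X(∞)_i = X(∞)_j whenever i and j lie in the same class I_l. -/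

import Mathlib

open Matrix Filter Finset

/-- A confidence matrix is a row-stochastic matrix with nonnegative entries. -/
def RowStochastic {n : ℕ} (A : Matrix (Fin n) (Fin n) ℝ) : Prop :=
  (∀ i j, 0 ≤ A i j) ∧ ∀ i, ∑ j, A i j = 1

/-!
Call a set of agents closed at time `t` if none of its members gives weight to an outsider. The
sets that are closed from some time on form a finite Boolean algebra, whose atoms are the classes
of the partition. From some time on each class evolves autonomously, and each of its nonempty
proper subsets keeps failing to be closed.

Within one class, let `m` be the least opinion at time `s` and consider an agent of opinion `m + d`.
As long as the singleton of this agent is closed, the agent's opinion stays at least `m + d`. When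
the singleton first fails to be closed, by symmetry some other agent gives this agent weight at
least `δ`, and both have opinion at least `m + δ * d` one step later. Repeating this with the
enlarged set, all opinions of the class are eventually at least `m + δ ^ k * d`, where `k` is the
size of the class. The least opinion increases to some limit `L`, hence `m + δ ^ k * d ≤ L`, which
forces `d → 0` as `s → ∞`.
-/

open scoped Topology

section ClosedClass

variable {ι κ R : Type*} [Zero R]

/-- A closed set of states of a matrix, in the sense of Markov chains: no agent in `S` is influenced
by an agent outside `S`. -/
def IsClosedClass (A : Matrix ι ι R) (S : Set ι) : Prop :=
  ∀ i ∈ S, ∀ j ∉ S, A i j = 0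

/-- Cut-balance of the zero pattern: a set of agents that is not influenced from outside does not
influence the outside either. This is the consequence of a symmetric zero pattern on which
convergence rests. -/
def CutBalanced (A : Matrix ι ι R) : Prop :=
  ∀ S, IsClosedClass A S → IsClosedClass A Sᶜ

lemma isClosedClass_univ (A : Matrix ι ι R) : IsClosedClass A Set.univ :=
  fun _ _ j hj ↦ absurd (Set.mem_univ j) hj

lemma isClosedClass_sInter {A : Matrix ι ι R} {F : Set (Set ι)}
    (hF : ∀ S ∈ F, IsClosedClass A S) : IsClosedClass A (⋂₀ F) := by
  intro i hi j hj
  obtain ⟨S, hS, hjS⟩ : ∃ S ∈ F, j ∉ S := by simpa using hj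
  exact hF S hS i (hi S hS) j hjS

lemma IsClosedClass.preimage {A : Matrix ι ι R} {S : Set ι} (hS : IsClosedClass A S) (f : κ → ι) :
    IsClosedClass (A.submatrix f f) (f ⁻¹' S) :=
  fun i hi j hj ↦ hS (f i) hi (f j) hj

lemma IsClosedClass.image_val {A : Matrix ι ι R} {C : Set ι} (hC : IsClosedClass A C) {S : Set C}
    (hS : IsClosedClass (A.submatrix Subtype.val Subtype.val) S) :
    IsClosedClass A (Subtype.val '' S) := by
  rintro _ ⟨i, hi, rfl⟩ j hj
  by_cases hjC : j ∈ C
  · exact hS i hi ⟨j, hjC⟩ fun hjS ↦ hj ⟨_, hjS, rfl⟩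
  · exact hC i i.2 j hjC

lemma CutBalanced.of_symm {A : Matrix ι ι R} (hA : ∀ i j, A i j = 0 → A j i = 0) :
    CutBalanced A :=
  fun _ hS i hi j hj ↦ hA j i (hS j (not_not.1 hj) i hi)

lemma CutBalanced.submatrix_val {A : Matrix ι ι R} (hA : CutBalanced A) {C : Set ι}
    (hC : IsClosedClass A C) : CutBalanced (A.submatrix (Subtype.val : C → ι) Subtype.val) := by
  intro S hS
  have hcompl := (hA _ (hC.image_val hS)).preimage (Subtype.val : C → ι)
  rwa [Set.preimage_compl, Set.preimage_image_eq S Subtype.val_injective] at hcompl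

lemma IsClosedClass.submatrix_val_mulVec_comp {α : Type*} [NonUnitalNonAssocSemiring α] [Fintype ι]
    {A : Matrix ι ι α} {C : Set ι} [Fintype C] (hC : IsClosedClass A C) (x : ι → α) :
    A.submatrix (Subtype.val : C → ι) (Subtype.val : C → ι) *ᵥ (x ∘ Subtype.val) =
      (A *ᵥ x) ∘ Subtype.val := by
  funext i
  simp only [mulVec, dotProduct, submatrix_apply, Function.comp_apply]
  rw [← Finset.sum_subset (subset_univ C.toFinset) fun j _ hj ↦ by
    rw [hC i i.2 j (by simpa using hj), zero_mul]]
  exact (Finset.sum_subtype _ (fun _ ↦ Set.mem_toFinset) fun j ↦ A i j * x j).symm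

end ClosedClass

section LimitClass

variable {ι R : Type*} [Zero R] {A : ℕ → Matrix ι ι R}

/-- The partition of the agents into the classes on which opinions agree in the limit. Two agents
are equivalent when they lie in the same eventually closed sets. -/
def limitClass (A : ℕ → Matrix ι ι R) : Setoid ι :=
  Setoid.ker fun i ↦ {S | i ∈ S ∧ ∀ᶠ t in atTop, IsClosedClass (A t) S}

lemma mem_of_limitClass_of_mem {i j : ι} (hij : limitClass A i j) {S : Set ι}
    (hS : ∀ᶠ t in atTop, IsClosedClass (A t) S) (hi : i ∈ S) : j ∈ S :=
  ((Set.ext_iff.1 (Setoid.ker_def.1 hij) S).1 ⟨hi, hS⟩).1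

lemma limitClass_eq_sInter (hA : ∀ t, CutBalanced (A t)) (i : ι) :
    {j | limitClass A i j} = ⋂₀ {S | i ∈ S ∧ ∀ᶠ t in atTop, IsClosedClass (A t) S} := by
  refine Set.Subset.antisymm (fun j hij S hS ↦ mem_of_limitClass_of_mem hij hS.2 hS.1) ?_
  refine fun j hj ↦ Setoid.ker_def.2 (Set.ext fun S ↦ ⟨fun hS ↦ ⟨hj S hS, hS.2⟩, fun hS ↦ ?_⟩)
  refine ⟨by_contra fun hi ↦ ?_, hS.2⟩
  exact hj Sᶜ ⟨hi, hS.2.mono fun t ↦ hA t S⟩ hS.1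

lemma eventually_isClosedClass_limitClass [Finite ι] (hA : ∀ t, CutBalanced (A t)) (i : ι) :
    ∀ᶠ t in atTop, IsClosedClass (A t) {j | limitClass A i j} := by
  rw [limitClass_eq_sInter hA i]
  refine Eventually.mono ?_ fun t ↦ isClosedClass_sInter
  exact (Set.toFinite _).eventually_all.2 fun S hS ↦ hS.2

lemma frequently_not_isClosedClass_submatrix {i : ι} {t₀ : ℕ}
    (hC : ∀ t ≥ t₀, IsClosedClass (A t) {j | limitClass A i j})
    {S : Set {j | limitClass A i j}} (hS : S.Nonempty) (hne : S ≠ Set.univ) :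
    ∃ᶠ t in atTop, ¬ IsClosedClass ((A (t + t₀)).submatrix Subtype.val Subtype.val) S := by
  refine fun hclosed ↦ hne (Set.eq_univ_of_forall fun j ↦ ?_)
  obtain ⟨a, ha⟩ := hS
  have himage : ∀ᶠ t in atTop, IsClosedClass (A t) (Subtype.val '' S) := by
    rw [← map_add_atTop_eq_nat t₀, eventually_map]
    filter_upwards [hclosed] with t ht
    exact (hC _ (Nat.le_add_left _ _)).image_val (not_not.1 ht)
  have haj : limitClass A a j := (limitClass A).trans' ((limitClass A).symm' a.2) j.2
  exact Subtype.val_injective.mem_set_image.1 <|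
    mem_of_limitClass_of_mem haj himage (Set.mem_image_of_mem _ ha)

end LimitClass

section RowStochastic

variable {ι R : Type*} [Fintype ι] [DecidableEq ι] [Ring R] [PartialOrder R] [IsOrderedRing R]
  {A : Matrix ι ι R} {S : Set ι} {x : ι → R} {c : R} {i : ι}

lemma mul_sub_le_mulVec_sub (hA : A ∈ rowStochastic R ι) (hS : IsClosedClass A S)
    (hx : ∀ j ∈ S, c ≤ x j) (hi : i ∈ S) (k : ι) :
    A i k * (x k - c) ≤ (A *ᵥ x) i - c := by
  have hsum : (A *ᵥ x) i - c = ∑ j, A i j * (x j - c) := by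
    simp only [mul_sub, sum_sub_distrib, ← sum_mul, sum_row_of_mem_rowStochastic hA, one_mul,
      mulVec, dotProduct]
  rw [hsum]
  refine single_le_sum (f := fun j ↦ A i j * (x j - c)) (fun j _ ↦ ?_) (mem_univ k)
  by_cases hj : j ∈ S
  · exact mul_nonneg (nonneg_of_mem_rowStochastic hA) (sub_nonneg.2 (hx j hj))
  · simp [hS i hi j hj]

lemma le_mulVec_of_isClosedClass (hA : A ∈ rowStochastic R ι) (hS : IsClosedClass A S)
    (hx : ∀ j ∈ S, c ≤ x j) (hi : i ∈ S) : c ≤ (A *ᵥ x) i :=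
  sub_nonneg.1 <| (mul_nonneg (nonneg_of_mem_rowStochastic hA) (sub_nonneg.2 (hx i hi))).trans
    (mul_sub_le_mulVec_sub hA hS hx hi i)

end RowStochastic

section Admissible

variable {ι : Type*} [Fintype ι] [DecidableEq ι] {δ : ℝ}

/-- The standing assumptions on the confidence matrix at a single time, with lower bound `δ` on its
positive entries and with cut-balance in place of a symmetric zero pattern. -/
structure IsAdmissible (δ : ℝ) (A : Matrix ι ι ℝ) : Prop where
  mem_rowStochastic : A ∈ rowStochastic ℝ ι
  diag_pos : ∀ i, 0 < A i i
  cutBalanced : CutBalanced A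
  le_of_pos : ∀ i j, 0 < A i j → δ ≤ A i j

lemma IsAdmissible.le_one {A : Matrix ι ι ℝ} (hA : IsAdmissible δ A) (i : ι) : δ ≤ 1 :=
  (hA.le_of_pos i i (hA.diag_pos i)).trans (le_one_of_mem_rowStochastic hA.mem_rowStochastic)

lemma IsAdmissible.of_symm {A : Matrix ι ι ℝ} (hA : A ∈ rowStochastic ℝ ι)
    (hdiag : ∀ i, 0 < A i i) (hsym : ∀ i j, 0 < A i j ↔ 0 < A j i)
    (hmin : ∀ i j, 0 < A i j → δ ≤ A i j) : IsAdmissible δ A := by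
  refine ⟨hA, hdiag, .of_symm fun i j hij ↦ ?_, hmin⟩
  have hji : ¬ 0 < A j i := fun h ↦ ((hsym j i).1 h).ne' hij
  exact le_antisymm (not_lt.1 hji) (nonneg_of_mem_rowStochastic hA)

lemma IsAdmissible.submatrix_val {A : Matrix ι ι ℝ} (hA : IsAdmissible δ A) {C : Set ι}
    [Fintype C] (hC : IsClosedClass A C) :
    IsAdmissible δ (A.submatrix (Subtype.val : C → ι) Subtype.val) where
  mem_rowStochastic := by
    obtain ⟨hnonneg, hone⟩ := Matrix.mem_rowStochastic.1 hA.mem_rowStochastic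
    refine Matrix.mem_rowStochastic.2 ⟨fun i j ↦ hnonneg i j, ?_⟩
    exact (hC.submatrix_val_mulVec_comp 1).trans (by rw [hone]; rfl)
  diag_pos i := hA.diag_pos i
  cutBalanced := hA.cutBalanced.submatrix_val hC
  le_of_pos i j := hA.le_of_pos i j

end Admissible

section OpinionTrajectory

variable {ι : Type*} [Fintype ι]

/-- A process `X` of continuous opinion dynamics with confidence matrices `A t`. -/
def IsOpinionTrajectory (A : ℕ → Matrix ι ι ℝ) (X : ℕ → ι → ℝ) : Prop :=
  ∀ t, X (t + 1) = A t *ᵥ X t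

lemma IsOpinionTrajectory.neg {A : ℕ → Matrix ι ι ℝ} {X : ℕ → ι → ℝ}
    (hX : IsOpinionTrajectory A X) :
    IsOpinionTrajectory A (-X) :=
  fun t ↦ by simp [hX t, mulVec_neg]

lemma IsOpinionTrajectory.submatrix_val {A : ℕ → Matrix ι ι ℝ} {X : ℕ → ι → ℝ}
    (hX : IsOpinionTrajectory A X) {C : Set ι} [Fintype C] {t₀ : ℕ}
    (hC : ∀ t ≥ t₀, IsClosedClass (A t) C) :
    IsOpinionTrajectory (fun t ↦ (A (t + t₀)).submatrix (Subtype.val : C → ι) Subtype.val)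
      (fun t ↦ X (t + t₀) ∘ Subtype.val) := by
  intro t
  have hrestrict := (hC (t + t₀) (Nat.le_add_left _ _)).submatrix_val_mulVec_comp (X (t + t₀))
  simpa only [hX (t + t₀), add_right_comm] using hrestrict.symm

namespace IsOpinionTrajectory

variable [DecidableEq ι] {A : ℕ → Matrix ι ι ℝ} {X : ℕ → ι → ℝ} {δ : ℝ}

lemma le_of_isClosedClass (hX : IsOpinionTrajectory A X) (hA : ∀ t, A t ∈ rowStochastic ℝ ι)
    {S : Set ι} {s t : ℕ} (hst : s ≤ t) (hS : ∀ u, s ≤ u → u < t → IsClosedClass (A u) S) {c : ℝ}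
    (hc : ∀ i ∈ S, c ≤ X s i) : ∀ i ∈ S, c ≤ X t i := by
  induction t, hst using Nat.le_induction with
  | base => exact hc
  | succ t hst ih =>
    intro i hi
    rw [hX]
    exact le_mulVec_of_isClosedClass (hA t) (hS t hst t.lt_succ_self)
      (ih fun u hsu hut ↦ hS u hsu (hut.trans t.lt_succ_self)) hi

lemma le_of_le (hX : IsOpinionTrajectory A X) (hA : ∀ t, A t ∈ rowStochastic ℝ ι) {s t : ℕ}
    (hst : s ≤ t) {c : ℝ} (hc : ∀ i, c ≤ X s i) (i : ι) : c ≤ X t i :=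
  hX.le_of_isClosedClass hA hst (fun u _ _ ↦ isClosedClass_univ (A u)) (fun j _ ↦ hc j) i
    (Set.mem_univ i)

lemma exists_ssuperset_forall_le (hX : IsOpinionTrajectory A X) (hA : ∀ t, IsAdmissible δ (A t))
    {S : Set ι} {s : ℕ} (hS : ∃ t ≥ s, ¬ IsClosedClass (A t) S) {m d : ℝ} (hd : 0 ≤ d)
    (hm : ∀ i, m ≤ X s i) (hmd : ∀ i ∈ S, m + d ≤ X s i) :
    ∃ T ≥ s, ∃ S', S ⊂ S' ∧ ∀ i ∈ S', m + δ * d ≤ X T i := by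
  classical
  have hrow t := (hA t).mem_rowStochastic
  obtain ⟨t, ⟨hst, hopen⟩, hfirst⟩ :
      ∃ t, (s ≤ t ∧ ¬ IsClosedClass (A t) S) ∧ ∀ u, s ≤ u → u < t → IsClosedClass (A u) S :=
    ⟨Nat.find hS, Nat.find_spec hS, fun u hsu hut ↦
      not_not.1 fun hu ↦ Nat.find_min hS hut ⟨hsu, hu⟩⟩
  have hstay : ∀ i ∈ S, m + d ≤ X t i := hX.le_of_isClosedClass hrow hst hfirst hmd
  have henter : ∃ i ∉ S, ∃ k ∈ S, 0 < A t i k := by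
    by_contra! hnone
    rw [← compl_compl S] at hopen
    refine hopen ((hA t).cutBalanced Sᶜ fun i hi k hk ↦ ?_)
    exact le_antisymm (hnone i hi k (not_not.1 hk)) (nonneg_of_mem_rowStochastic (hrow t))
  refine ⟨t + 1, by lia, {i | ∃ k ∈ S, 0 < A t i k}, ?_, ?_⟩
  · obtain ⟨i, hi, hpos⟩ := henter
    have hsub : S ⊆ {i | ∃ k ∈ S, 0 < A t i k} := fun k hk ↦ ⟨k, hk, (hA t).diag_pos k⟩
    exact (Set.ssubset_iff_of_subset hsub).2 ⟨i, hpos, hi⟩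
  · rintro i ⟨k, hk, hpos⟩
    have hgain := mul_sub_le_mulVec_sub (hrow t) (isClosedClass_univ _)
      (fun j _ ↦ hX.le_of_le hrow hst hm j) (Set.mem_univ i) k
    have hδd : δ * d ≤ A t i k * (X t k - m) :=
      mul_le_mul ((hA t).le_of_pos i k hpos) (le_sub_iff_add_le'.2 (hstay k hk)) hd hpos.le
    rw [hX]
    linarith

lemma exists_forall_add_pow_mul_le (hX : IsOpinionTrajectory A X) (hδ : 0 < δ)
    (hA : ∀ t, IsAdmissible δ (A t))
    (hfreq : ∀ S : Set ι, S.Nonempty → S ≠ Set.univ → ∃ᶠ t in atTop, ¬ IsClosedClass (A t) S)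
    {m : ℝ} (k : ℕ) {S : Set ι} (hS : S.Nonempty) (hk : Sᶜ.ncard ≤ k) {s : ℕ} {d : ℝ}
    (hd : 0 ≤ d) (hm : ∀ i, m ≤ X s i) (hmd : ∀ i ∈ S, m + d ≤ X s i) :
    ∃ T ≥ s, ∀ i, m + δ ^ k * d ≤ X T i := by
  induction k generalizing S s d with
  | zero =>
    have hSuniv : S = Set.univ :=
      Set.compl_empty_iff.1 ((Set.ncard_eq_zero (Set.toFinite _)).1 (Nat.le_zero.1 hk))
    exact ⟨s, le_rfl, fun i ↦ by simpa using hmd i (hSuniv ▸ Set.mem_univ i)⟩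
  | succ k ih =>
    rcases eq_or_ne S Set.univ with rfl | hne
    · refine ⟨s, le_rfl, fun i ↦ le_trans ?_ (hmd i (Set.mem_univ i))⟩
      gcongr
      exact mul_le_of_le_one_left hd (pow_le_one₀ hδ.le ((hA 0).le_one i))
    · obtain ⟨T, hsT, S', hSS', hT⟩ :=
        hX.exists_ssuperset_forall_le hA (frequently_atTop.1 (hfreq S hS hne) s) hd hm hmd
      have hcard : S'ᶜ.ncard < Sᶜ.ncard := Set.ncard_lt_ncard (compl_lt_compl_iff_lt.2 hSS')
      obtain ⟨T', hTT', hT'⟩ := ih (hS.mono hSS'.subset) (by lia) (mul_nonneg hδ.le hd)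
        (hX.le_of_le (fun t ↦ (hA t).mem_rowStochastic) hsT hm) hT
      exact ⟨T', hsT.trans hTT', fun i ↦ by simpa only [pow_succ, mul_assoc] using hT' i⟩

lemma monotone_iInf [Nonempty ι] (hX : IsOpinionTrajectory A X)
    (hA : ∀ t, A t ∈ rowStochastic ℝ ι) : Monotone fun t ↦ ⨅ i, X t i :=
  fun _ _ hst ↦ le_ciInf <| hX.le_of_le hA hst fun i ↦ ciInf_le (Set.finite_range _).bddBelow i

lemma bddAbove_range_iInf [Nonempty ι] (hX : IsOpinionTrajectory A X)
    (hA : ∀ t, A t ∈ rowStochastic ℝ ι) : BddAbove (Set.range fun t ↦ ⨅ i, X t i) := by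
  obtain ⟨a⟩ := ‹Nonempty ι›
  refine ⟨⨆ i, X 0 i, ?_⟩
  rintro _ ⟨t, rfl⟩
  have hupper : -⨆ i, X 0 i ≤ (-X) t a :=
    hX.neg.le_of_le hA t.zero_le
      (fun i ↦ neg_le_neg (le_ciSup (Set.finite_range (X 0)).bddAbove i)) a
  exact (ciInf_le (Set.finite_range (X t)).bddBelow a).trans (neg_le_neg_iff.1 hupper)

theorem exists_forall_tendsto [Nonempty ι] (hX : IsOpinionTrajectory A X) (hδ : 0 < δ)
    (hA : ∀ t, IsAdmissible δ (A t))
    (hfreq : ∀ S : Set ι, S.Nonempty → S ≠ Set.univ → ∃ᶠ t in atTop, ¬ IsClosedClass (A t) S) :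
    ∃ L, ∀ i, Tendsto (fun t ↦ X t i) atTop (𝓝 L) := by
  have hrow t := (hA t).mem_rowStochastic
  set m : ℕ → ℝ := fun t ↦ ⨅ i, X t i
  have hbdd : BddAbove (Set.range m) := hX.bddAbove_range_iInf hrow
  have hm : Tendsto m atTop (𝓝 (⨆ t, m t)) := tendsto_atTop_ciSup (hX.monotone_iInf hrow) hbdd
  have hmX (t : ℕ) (i : ι) : m t ≤ X t i := ciInf_le (Set.finite_range (X t)).bddBelow i
  set L := ⨆ t, m t
  set η := δ ^ Fintype.card ι
  have hη : 0 < η := by positivity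
  have hgain (s : ℕ) (i : ι) : m s + η * (X s i - m s) ≤ L := by
    obtain ⟨T, -, hT⟩ := hX.exists_forall_add_pow_mul_le hδ hA hfreq (Fintype.card ι)
      (Set.singleton_nonempty i) (Nat.card_eq_fintype_card (α := ι) ▸ Set.ncard_le_card _)
      (sub_nonneg.2 (hmX s i)) (hmX s) (by simp)
    exact (le_ciInf hT).trans (le_ciSup hbdd T)
  refine ⟨L, fun i ↦ tendsto_of_tendsto_of_tendsto_of_le_of_le hm
    (h := fun t ↦ m t + (L - m t) / η) ?_ (fun t ↦ hmX t i) fun t ↦ ?_⟩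
  · simpa using hm.add ((hm.const_sub L).div_const η)
  · rw [← sub_le_iff_le_add', le_div_iff₀ hη]
    linarith [hgain t i]

lemma exists_forall_limitClass_tendsto (hX : IsOpinionTrajectory A X) (hδ : 0 < δ)
    (hA : ∀ t, IsAdmissible δ (A t)) (i : ι) :
    ∃ L, ∀ j, limitClass A i j → Tendsto (fun t ↦ X t j) atTop (𝓝 L) := by
  classical
  obtain ⟨t₀, hC⟩ := eventually_atTop.1 <|
    eventually_isClosedClass_limitClass (fun t ↦ (hA t).cutBalanced) i
  have : Nonempty {j | limitClass A i j} := ⟨i, (limitClass A).refl' i⟩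
  obtain ⟨L, hL⟩ := (hX.submatrix_val hC).exists_forall_tendsto hδ
    (fun t ↦ (hA _).submatrix_val (hC _ (Nat.le_add_left _ _)))
    (fun S ↦ frequently_not_isClosedClass_submatrix hC)
  exact ⟨L, fun j hj ↦ (tendsto_add_atTop_iff_nat t₀).1 (hL ⟨j, hj⟩)⟩

theorem exists_tendsto_forall_limitClass_eq (hX : IsOpinionTrajectory A X) (hδ : 0 < δ)
    (hA : ∀ t, IsAdmissible δ (A t)) :
    ∃ Xinf, Tendsto X atTop (𝓝 Xinf) ∧ ∀ i j, limitClass A i j → Xinf i = Xinf j := by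
  choose Xinf hXinf using hX.exists_forall_limitClass_tendsto hδ hA
  have hlim (i : ι) : Tendsto (fun t ↦ X t i) atTop (𝓝 (Xinf i)) :=
    hXinf i i ((limitClass A).refl' i)
  exact ⟨Xinf, tendsto_pi_nhds.2 hlim, fun i j hij ↦
    tendsto_nhds_unique (hXinf i j hij) (hlim j)⟩

end IsOpinionTrajectory

end OpinionTrajectory

lemma exists_surjective_fin_ker_eq {ι : Type*} [Finite ι] (r : Setoid ι) :
    ∃ (p : ℕ) (f : ι → Fin p), Function.Surjective f ∧ Setoid.ker f = r := by
  obtain ⟨p, ⟨e⟩⟩ := Finite.exists_equiv_fin (Quotient r)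
  refine ⟨p, e ∘ Quotient.mk r, e.surjective.comp Quotient.mk_surjective, ?_⟩
  ext i j
  simp [Setoid.ker_def, Quotient.eq]

theorem opinion_dynamics_stabilization_general {ι : Type*} [Fintype ι] [DecidableEq ι]
    (A : ℕ → Matrix ι ι ℝ) (δ : ℝ) (hδ : 0 < δ) (hA : ∀ t, IsAdmissible δ (A t)) :
    ∃ (t₀ : ℕ) (p : ℕ) (I : Fin p → Finset ι),
      (∀ l, (I l).Nonempty) ∧
      (∀ l m, l ≠ m → Disjoint (I l) (I m)) ∧
      (∀ i, ∃ l, i ∈ I l) ∧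
      (∀ t ≥ t₀, ∀ l, IsClosedClass (A t) (I l)) ∧
      ∀ X : ℕ → ι → ℝ, (∀ t, X (t + 1) = A t *ᵥ X t) →
        ∃ Xinf : ι → ℝ,
          Tendsto X atTop (𝓝 Xinf) ∧
          ∀ l, ∀ i ∈ I l, ∀ j ∈ I l, Xinf i = Xinf j := by
  obtain ⟨t₀, hclosed⟩ := eventually_atTop.1 <| eventually_all.2 <|
    eventually_isClosedClass_limitClass fun t ↦ (hA t).cutBalanced
  obtain ⟨p, f, hsurj, hf⟩ := exists_surjective_fin_ker_eq (limitClass A)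
  have hrel (i j : ι) : limitClass A i j ↔ f i = f j := hf ▸ Setoid.ker_def
  refine ⟨t₀, p, fun l ↦ {i | f i = l}, fun l ↦ ?_, fun l m hlm ↦ ?_, fun i ↦ ⟨f i, by simp⟩,
    fun t ht l ↦ ?_, fun X hX ↦ ?_⟩
  · simpa [Finset.Nonempty] using hsurj l
  · simpa [Finset.disjoint_left] using fun i hi ↦ hi ▸ hlm
  · obtain ⟨i, rfl⟩ := hsurj l
    simpa [hrel, eq_comm] using hclosed t ht i
  · obtain ⟨Xinf, hlim, heq⟩ :=
      IsOpinionTrajectory.exists_tendsto_forall_limitClass_eq hX hδ hA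
    exact ⟨Xinf, hlim, fun l i hi j hj ↦ heq i j ((hrel i j).2 (by simp_all))⟩

lemma RowStochastic.mem_rowStochastic {n : ℕ} {A : Matrix (Fin n) (Fin n) ℝ}
    (hA : RowStochastic A) : A ∈ rowStochastic ℝ (Fin n) :=
  mem_rowStochastic_iff_sum.2 hA

/-- **Stabilization of opinion profiles.** Under positive diagonals, symmetric zero pattern
and a uniform positive lower bound `δ` on positive entries, every process of continuous
opinion dynamics `X(t+1) = A(t)·X(t)` converges, and there are a time step `t₀` and a
partition `I₁,…,I_p` of the agents (independent of `X(0)`) such that agents in the same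
class have equal limit opinions. -/
theorem opinion_dynamics_stabilization
    (n : ℕ) (hn : 1 ≤ n) (A : ℕ → Matrix (Fin n) (Fin n) ℝ) (δ : ℝ) (hδ : 0 < δ)
    (hstoch : ∀ t, RowStochastic (A t))
    (hdiag : ∀ t i, 0 < A t i i)
    (hsym : ∀ t i j, 0 < A t i j ↔ 0 < A t j i)
    (hmin : ∀ t i j, 0 < A t i j → δ < A t i j) :
    ∃ (t₀ : ℕ) (p : ℕ) (I : Fin p → Finset (Fin n)),
      (∀ l, (I l).Nonempty) ∧
      (∀ l m, l ≠ m → Disjoint (I l) (I m)) ∧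
      (∀ i : Fin n, ∃ l, i ∈ I l) ∧
      ∀ X : ℕ → Fin n → ℝ, (∀ t, X (t + 1) = (A t).mulVec (X t)) →
        ∃ Xinf : Fin n → ℝ,
          Tendsto X atTop (nhds Xinf) ∧
          ∀ l, ∀ i ∈ I l, ∀ j ∈ I l, Xinf i = Xinf j := by
  obtain ⟨t₀, p, I, hne, hdisj, hcover, -, hlim⟩ := opinion_dynamics_stabilization_general A δ hδ
    fun t ↦ .of_symm (hstoch t).mem_rowStochastic (hdiag t) (hsym t) fun i j h ↦ (hmin t i j h).le
  exact ⟨t₀, p, I, hne, hdisj, hcover, hlim⟩
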